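/- Let G be a finite group and N a normal subgroup such that G/N is cyclic, generated by the coset of q ∈ G. Then (G:N) times the number of conjugacy classes of G contained in qN equals the number of irreducible complex characters ρ of G whose restriction to N is irreducible. -/

import Mathlib

open scoped BigOperators

/-- `ρ : G → ℂ` is the character of an irreducible (simple) finite-dimensional
complex representation of `G`. -/
def IsIrrChar (G : Type) [Group G] (ρ : G → ℂ) : Prop :=
  ∃ V : FDRep ℂ G, CategoryTheory.Simple V ∧ ρ = V.character

/-- `Θ : G → ℂ` is the character of some finite-dimensional complex representation of `G`. -/
def IsChar (G : Type) [Group G] (Θ : G → ℂ) : Prop :=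
  ∃ V : FDRep ℂ G, Θ = V.character

variable {G : Type} [Group G]

/-- The action of a character `χ ∈ Q̂` (where `Q = G ⧸ N`) on a function `ρ : G → ℂ`:
`(χ · ρ)(g) = χ(gN) · ρ(g)`. -/
def charMul (N : Subgroup G) [N.Normal] (χ : (G ⧸ N) →* ℂˣ) (ρ : G → ℂ) : G → ℂ :=
  fun g => (χ (g : G ⧸ N) : ℂ) * ρ g

/-- The orbit of `ρ` under the tensoring action of `Q̂ = Hom(G ⧸ N, ℂˣ)`. -/
def qhatOrbit (N : Subgroup G) [N.Normal] (ρ : G → ℂ) : Set (G → ℂ) :=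
  {ρ' | ∃ χ : (G ⧸ N) →* ℂˣ, ρ' = charMul N χ ρ}

/-- The coset `qN`, as a subset of `G`. -/
def coset (N : Subgroup G) [N.Normal] (q : G) : Set G :=
  {g | (g : G ⧸ N) = (q : G ⧸ N)}

/-- `C_q`: the set of conjugacy classes of `G` contained in the coset `qN`. -/
def Cset (N : Subgroup G) [N.Normal] (q : G) : Set (ConjClasses G) :=
  {c | c.carrier ⊆ coset N q}

/-- `R_q`: the set of `Q̂`-orbits on the irreducible characters of `G`
containing a character not identically zero on `qN`. -/
def Rset (N : Subgroup G) [N.Normal] (q : G) : Set (Set (G → ℂ)) :=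
  {S | (∃ ρ, IsIrrChar G ρ ∧ S = qhatOrbit N ρ) ∧ ∃ ρ' ∈ S, ∃ g ∈ coset N q, ρ' g ≠ 0}

/-- The class function `π_x` for `x ∈ Q = G ⧸ N`:
`π_x(g) = (1/#Q̂) ∑_{χ ∈ Q̂} conj(χ(x)) χ(gN)`. -/
noncomputable def piQ (N : Subgroup G) [N.Normal] (x : G ⧸ N) : G → ℂ :=
  fun g => (Nat.card ((G ⧸ N) →* ℂˣ) : ℂ)⁻¹ *
    ∑ᶠ χ : (G ⧸ N) →* ℂˣ, (starRingEnd ℂ) (χ x : ℂ) * (χ (g : G ⧸ N) : ℂ)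

/-- The space of class functions on `G`, as a submodule of `G → ℂ`. -/
noncomputable def classFunSubmodule (G : Type) [Group G] : Submodule ℂ (G → ℂ) where
  carrier := {f | ∀ g h : G, f (h * g * h⁻¹) = f g}
  add_mem' := by intro a b ha hb g h; simp only [Pi.add_apply, ha g h, hb g h]
  zero_mem' := by intro g h; rfl
  smul_mem' := by intro c f hf g h; simp only [Pi.smul_apply, hf g h]

/-- The space of class functions on `G` vanishing outside the coset `qN`. -/
noncomputable def cosetClassFun (N : Subgroup G) [N.Normal] (q : G) : Submodule ℂ (G → ℂ) where
  carrier := {f | (∀ g h : G, f (h * g * h⁻¹) = f g) ∧ ∀ g, g ∉ coset N q → f g = 0}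
  add_mem' := by
    intro a b ha hb
    exact ⟨fun g h => by simp only [Pi.add_apply, ha.1 g h, hb.1 g h],
      fun g hg => by simp only [Pi.add_apply, ha.2 g hg, hb.2 g hg, add_zero]⟩
  zero_mem' := ⟨fun g h => rfl, fun g hg => rfl⟩
  smul_mem' := by
    intro c f hf
    exact ⟨fun g h => by simp only [Pi.smul_apply, hf.1 g h],
      fun g hg => by simp only [Pi.smul_apply, hf.2 g hg, smul_zero]⟩

/-!
By column orthogonality, the sum of `ρ g * ρ g⁻¹` over `ρ ∈ Irr G` and `g ∈ qN` is `#G * ∑ g ∈ qN,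
1 / #(class of g)`, which is `#G` times the number of classes contained in `qN`. On the other
hand, Fourier inversion on `G ⧸ N` and row orthogonality of `ρ` with its twists by characters `χ`
of `G ⧸ N` give `∑ g ∈ aN, ρ g * ρ g⁻¹ = #N * ∑ χ a⁻¹` for every `a`, where `χ` runs over the
stabilizer of `ρ`. For `a = 1` this shows that `ρ` is irreducible on `N` exactly when its
stabilizer is trivial, in which case the sum over `qN` is `#N`. If some `χ ≠ 1` stabilizes `ρ`,
then `χ q ≠ 1` forces `ρ` to vanish on `qN`, so that the sum over `qN` is `0`. Comparing the two
counts and cancelling `#N` gives the theorem.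
-/

section GroupAlgebra

open MonoidAlgebra (single of_apply single_mul_single)

variable {k H : Type*} [CommSemiring k] [Group H] [Fintype H]

/-- The pairing of functions on a finite group. It is not divided by the group order, and since
`ρ g⁻¹` is the complex conjugate of `ρ g` for a complex character `ρ`, on characters it is `#H`
times the usual inner product. -/
def charPairing : LinearMap.BilinForm k (H → k) :=
  LinearMap.mk₂ k (fun f f' => ∑ g, f g * f' g⁻¹)
    (by simp [add_mul, Finset.sum_add_distrib]) (by simp [mul_assoc, Finset.mul_sum])
    (by simp [mul_add, Finset.sum_add_distrib]) (by simp [mul_left_comm, Finset.mul_sum])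

lemma charPairing_apply (f f' : H → k) : charPairing f f' = ∑ g, f g * f' g⁻¹ := rfl

/-- The element `∑ f(g) g⁻¹` of the group algebra, which acts on a representation with
character `χ` by an operator of trace `charPairing f χ`. -/
noncomputable def groupAlgebraInvSum (f : H → k) : MonoidAlgebra k H := ∑ g, single g⁻¹ (f g)

lemma coeff_groupAlgebraInvSum (f : H → k) (g : H) :
    (groupAlgebraInvSum f).coeff g⁻¹ = f g := by
  classical
  simp [groupAlgebraInvSum, Finsupp.finsetSum_apply, Finsupp.single_apply]

lemma groupAlgebraInvSum_mem_center {f : H → k} (hf : ∀ g h, f (h * g * h⁻¹) = f g) :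
    groupAlgebraInvSum f ∈ Subalgebra.center k (MonoidAlgebra k H) := by
  rw [Subalgebra.mem_center_iff]
  intro a
  induction a using MonoidAlgebra.induction_on with
  | of x =>
    simp only [groupAlgebraInvSum, of_apply, Finset.sum_mul, Finset.mul_sum, single_mul_single,
      one_mul, mul_one]
    exact Fintype.sum_equiv (MulAut.conj x).toEquiv _ _ fun g => by
      simpa [mul_assoc] using (hf g x).symm
  | add a b ha hb => rw [add_mul, mul_add, ha, hb]
  | smul r a ha => rw [smul_mul_assoc, mul_smul_comm, ha]

end GroupAlgebra

section Representation

lemma asAlgebraHom_ofModule' {k H V : Type*} [CommSemiring k] [Monoid H] [AddCommMonoid V]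
    [Module k V] [Module (MonoidAlgebra k H) V] [IsScalarTower k (MonoidAlgebra k H) V] :
    (Representation.ofModule' V : Representation k H V).asAlgebraHom = Algebra.lsmul k k V :=
  Equiv.apply_symm_apply _ _

variable {k H V : Type*} [Field k] [Group H] [AddCommGroup V] [Module k V]

lemma trace_asAlgebraHom_groupAlgebraInvSum [Fintype H] (ρ : Representation k H V) (f : H → k) :
    LinearMap.trace k V (ρ.asAlgebraHom (groupAlgebraInvSum f)) = charPairing f ρ.character := by
  simp [groupAlgebraInvSum, charPairing_apply, Representation.asAlgebraHom_single,
    Representation.character]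

lemma isIrreducible_ofModule' [Module (MonoidAlgebra k H) V]
    [IsScalarTower k (MonoidAlgebra k H) V] [IsSimpleModule (MonoidAlgebra k H) V] :
    (Representation.ofModule' V : Representation k H V).IsIrreducible := by
  rw [Representation.irreducible_iff_isSimpleModule_asModule]
  let ρ : Representation k H V := Representation.ofModule' V
  let e : ρ.asModule ≃ₗ[MonoidAlgebra k H] V :=
    { ρ.asModuleEquiv with
      map_smul' := fun r x => (ρ.asModuleEquiv_map_smul r x).trans <| by
        rw [asAlgebraHom_ofModule']
        rfl }
  exact IsSimpleModule.congr e

end Representation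

section CentralElement

variable {k A : Type*} [Field k] [IsAlgClosed k] [CharZero k] [Ring A] [Algebra k A] {a : A}

lemma smul_eq_zero_of_trace_lsmul_eq_zero {M : Type*} [AddCommGroup M] [Module k M] [Module A M]
    [IsScalarTower k A M] [FiniteDimensional k M] [IsSimpleModule A M]
    (ha : a ∈ Subalgebra.center k A) (htr : LinearMap.trace k M (Algebra.lsmul k k M a) = 0)
    (m : M) : a • m = 0 := by
  have hcomm (b : A) : a * b = b * a := (Subalgebra.mem_center_iff.1 ha b).symm
  obtain ⟨c, hc⟩ := (IsSimpleModule.algebraMap_end_bijective_of_isAlgClosed k).2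
    { __ := Algebra.lsmul k k M a
      map_smul' := fun b m => by simp [smul_smul, hcomm] : Module.End A M }
  have hscalar : Algebra.lsmul k k M a = c • LinearMap.id :=
    LinearMap.ext fun x => (LinearMap.congr_fun hc x).symm
  have := IsSimpleModule.nontrivial A M
  rw [hscalar, map_smul, LinearMap.trace_id, smul_eq_mul, mul_eq_zero, Nat.cast_eq_zero,
    or_iff_left Module.finrank_pos.ne'] at htr
  simpa [htr] using LinearMap.congr_fun hscalar m

lemma eq_zero_of_trace_lsmul_eq_zero [FiniteDimensional k A] [IsSemisimpleRing A]
    (ha : a ∈ Subalgebra.center k A)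
    (htr : ∀ I : Ideal A, IsCoatom I →
      LinearMap.trace k (A ⧸ I) (Algebra.lsmul k k (A ⧸ I) a) = 0) : a = 0 := by
  rw [← Ideal.mem_bot, ← IsSemisimpleRing.jacobson_eq_bot, Ring.jacobson, Module.jacobson,
    Submodule.mem_sInf]
  intro I hI
  have : IsSimpleModule A (A ⧸ I) := isSimpleModule_iff_isCoatom.2 hI
  simpa [← Submodule.Quotient.mk_smul, Submodule.Quotient.mk_eq_zero] using
    smul_eq_zero_of_trace_lsmul_eq_zero ha (htr I hI) (Submodule.Quotient.mk 1)

end CentralElement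

section IrreducibleCharacters

variable {ρ ρ' : G → ℂ}

lemma IsIrrChar.isChar (hρ : IsIrrChar G ρ) : IsChar G ρ :=
  let ⟨V, _, h⟩ := hρ
  ⟨V, h⟩

lemma IsChar.mem_classFunSubmodule (hρ : IsChar G ρ) : ρ ∈ classFunSubmodule G := by
  obtain ⟨V, rfl⟩ := hρ
  exact V.char_conj

section Fintype

variable [Fintype G]

lemma isIrrChar_iff_charPairing_self (hρ : IsChar G ρ) :
    IsIrrChar G ρ ↔ charPairing ρ ρ = Nat.card G := by
  obtain ⟨V, rfl⟩ := hρ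
  refine ⟨?_, fun h => ⟨V, V.simple_iff_char_is_norm_one.2 h, rfl⟩⟩
  rintro ⟨W, hW, hVW⟩
  rw [hVW]
  exact W.simple_iff_char_is_norm_one.1 hW

lemma IsIrrChar.charPairing_eq_zero (hρ : IsIrrChar G ρ) (hρ' : IsIrrChar G ρ') (hne : ρ ≠ ρ') :
    charPairing ρ ρ' = 0 := by
  obtain ⟨V, _, rfl⟩ := hρ
  obtain ⟨W, _, rfl⟩ := hρ'
  have := invertibleOfNonzero (NeZero.ne (Nat.card G : ℂ))
  have h := FDRep.char_orthonormal V W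
  rw [if_neg fun ⟨i⟩ => hne (FDRep.char_iso i)] at h
  exact (mul_eq_zero.1 h).resolve_left (inv_ne_zero (NeZero.ne _))

open Classical in
lemma IsIrrChar.charPairing_eq_ite (hρ : IsIrrChar G ρ) (hρ' : IsIrrChar G ρ') :
    charPairing ρ ρ' = if ρ = ρ' then (Nat.card G : ℂ) else 0 := by
  split_ifs with h
  · subst h
    exact (isIrrChar_iff_charPairing_self hρ.isChar).1 hρ
  · exact hρ.charPairing_eq_zero hρ' h

end Fintype

variable [Finite G]

lemma isIrrChar_character {V : Type} [AddCommGroup V] [Module ℂ V] [FiniteDimensional ℂ V]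
    (ρ : Representation ℂ G V) [ρ.IsIrreducible] : IsIrrChar G ρ.character := by
  have := Fintype.ofFinite G
  have := invertibleOfNonzero (NeZero.ne (Nat.card G : ℂ))
  have h := Representation.char_orthonormal ρ ρ
  rw [if_pos ⟨.refl ρ⟩, inv_mul_eq_one₀ (NeZero.ne _)] at h
  exact (isIrrChar_iff_charPairing_self ⟨FDRep.of ρ, rfl⟩).2 h.symm

variable (G) in
lemma finite_setOf_isIrrChar : {ρ | IsIrrChar G ρ}.Finite := by
  have := Fintype.ofFinite G
  refine LinearIndependent.setFinite (R := ℂ) <| LinearMap.linearIndependent_of_isOrthoᵢ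
    (B := charPairing) (fun ρ ρ' hne => ?_) fun ρ => ?_
  · exact ρ.2.charPairing_eq_zero ρ'.2 (Subtype.coe_injective.ne hne)
  · rw [(isIrrChar_iff_charPairing_self ρ.2.isChar).1 ρ.2]
    exact NeZero.ne _

variable (G) in
/-- The set `Irr G` of irreducible complex characters of a finite group. -/
noncomputable def irrChars : Finset (G → ℂ) := (finite_setOf_isIrrChar G).toFinset

lemma mem_irrChars : ρ ∈ irrChars G ↔ IsIrrChar G ρ := by simp [irrChars]

end IrreducibleCharacters

section ConjClasses

lemma ncard_carrier_ne_zero [Finite G] (c : ConjClasses G) : c.carrier.ncard ≠ 0 := by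
  obtain ⟨g, rfl⟩ := c.exists_rep
  exact Set.ncard_ne_zero_of_mem ConjClasses.mem_carrier_mk

open Classical in
lemma sum_inv_ncard_carrier [Fintype G] (k : Type*) [DivisionRing k] [CharZero k]
    (C : Set (ConjClasses G)) :
    ∑ g with ConjClasses.mk g ∈ C, ((ConjClasses.mk g).carrier.ncard : k)⁻¹ = C.ncard := by
  rw [Set.ncard_eq_toFinset_card' C, Finset.cast_card,
    ← Finset.sum_fiberwise_of_maps_to (g := ConjClasses.mk) (t := C.toFinset) (by simp)]
  refine Finset.sum_congr rfl fun c hc => ?_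
  rw [Set.mem_toFinset] at hc
  have hfiber : ({g : G | ConjClasses.mk g ∈ C} : Finset G).filter (ConjClasses.mk · = c) =
      c.carrier.toFinset := by
    ext g
    simp only [Finset.mem_filter, Finset.mem_univ, true_and, Set.mem_toFinset,
      ConjClasses.mem_carrier_iff_mk_eq, and_iff_right_iff_imp]
    rintro rfl
    exact hc
  rw [hfiber, Finset.sum_congr rfl (g := fun _ => (c.carrier.ncard : k)⁻¹) fun g hg => by
    rw [ConjClasses.mem_carrier_iff_mk_eq.1 (Set.mem_toFinset.1 hg)], Finset.sum_const,
    ← Set.ncard_eq_toFinset_card', nsmul_eq_mul,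
    mul_inv_cancel₀ (Nat.cast_ne_zero.2 (ncard_carrier_ne_zero c))]

lemma mk_mem_Cset_iff (N : Subgroup G) [N.Normal] [IsMulCommutative (G ⧸ N)] (q g : G) :
    ConjClasses.mk g ∈ Cset N q ↔ g ∈ coset N q := by
  refine ⟨fun h => h ConjClasses.mem_carrier_mk, fun hg x hx => ?_⟩
  rw [ConjClasses.mem_carrier_iff_mk_eq, ConjClasses.mk_eq_mk_iff_isConj, isConj_comm,
    isConj_iff] at hx
  obtain ⟨c, rfl⟩ := hx
  simpa [coset, mul_comm' (c : G ⧸ N)] using hg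

end ConjClasses

section ColumnOrthogonality

section Fintype

variable [Fintype G] {f : G → ℂ}

lemma eq_zero_of_charPairing_eq_zero (hf : f ∈ classFunSubmodule G)
    (h : ∀ ρ, IsIrrChar G ρ → charPairing f ρ = 0) : f = 0 := by
  have hz : groupAlgebraInvSum f = 0 :=
    eq_zero_of_trace_lsmul_eq_zero (k := ℂ) (groupAlgebraInvSum_mem_center hf) fun I hI => by
      have : IsSimpleModule (MonoidAlgebra ℂ G) (MonoidAlgebra ℂ G ⧸ I) :=
        isSimpleModule_iff_isCoatom.2 hI
      have := isIrreducible_ofModule' (k := ℂ) (H := G) (V := MonoidAlgebra ℂ G ⧸ I)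
      rw [← asAlgebraHom_ofModule', trace_asAlgebraHom_groupAlgebraInvSum,
        h _ (isIrrChar_character _)]
  funext g
  rw [← coeff_groupAlgebraInvSum f g, hz]
  rfl

lemma sum_charPairing_smul_irrChars (hf : f ∈ classFunSubmodule G) :
    ∑ ρ ∈ irrChars G, charPairing f ρ • ρ = (Nat.card G : ℂ) • f := by
  classical
  rw [← sub_eq_zero]
  refine eq_zero_of_charPairing_eq_zero (sub_mem (sum_mem fun ρ hρ => ?_) ?_) fun τ hτ => ?_
  · exact Submodule.smul_mem _ _ (mem_irrChars.1 hρ).isChar.mem_classFunSubmodule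
  · exact Submodule.smul_mem _ _ hf
  · have hsum : ∑ ρ ∈ irrChars G, charPairing f ρ * charPairing ρ τ =
        charPairing f τ * Nat.card G := by
      rw [Finset.sum_congr rfl fun ρ hρ => by rw [(mem_irrChars.1 hρ).charPairing_eq_ite hτ]]
      simp [mem_irrChars.2 hτ]
    simp [hsum, mul_comm]

lemma charPairing_indicator_carrier (hf : f ∈ classFunSubmodule G) (h : G) :
    charPairing ((ConjClasses.mk h).carrier.indicator 1) f =
      (ConjClasses.mk h).carrier.ncard * f h⁻¹ := by
  classical
  have hconst : ∀ g ∈ (ConjClasses.mk h).carrier, f g⁻¹ = f h⁻¹ := by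
    intro g hg
    rw [ConjClasses.mem_carrier_iff_mk_eq, ConjClasses.mk_eq_mk_iff_isConj, isConj_iff] at hg
    obtain ⟨c, rfl⟩ := hg
    simpa [mul_assoc] using (hf g⁻¹ c).symm
  simp only [charPairing_apply, Set.indicator_apply, Pi.one_apply, ite_mul, one_mul, zero_mul,
    ← Finset.sum_filter]
  rw [Finset.sum_congr rfl fun g hg => hconst g (Finset.mem_filter.1 hg).2, Finset.sum_const,
    nsmul_eq_mul, Set.ncard_eq_toFinset_card']
  congr
  ext
  simp

end Fintype

lemma sum_irrChars_mul_inv [Finite G] (h : G) :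
    ∑ ρ ∈ irrChars G, ρ h * ρ h⁻¹ = Nat.card G / (ConjClasses.mk h).carrier.ncard := by
  have := Fintype.ofFinite G
  have hclass : (ConjClasses.mk h).carrier.indicator 1 ∈ classFunSubmodule G := fun g x => by
    have hx : ConjClasses.mk (x * g * x⁻¹) = ConjClasses.mk g :=
      ConjClasses.mk_eq_mk_iff_isConj.2 (isConj_iff.2 ⟨x, rfl⟩).symm
    classical
    simp only [Set.indicator_apply, ConjClasses.mem_carrier_iff_mk_eq, hx, Pi.one_apply]
  rw [eq_div_iff (Nat.cast_ne_zero.2 (ncard_carrier_ne_zero _))]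
  calc
    _ = ∑ ρ ∈ irrChars G, charPairing ((ConjClasses.mk h).carrier.indicator 1) ρ * ρ h := by
      rw [Finset.sum_mul]
      refine Finset.sum_congr rfl fun ρ hρ => ?_
      rw [charPairing_indicator_carrier (mem_irrChars.1 hρ).isChar.mem_classFunSubmodule]
      ring
    _ = (Nat.card G : ℂ) * (ConjClasses.mk h).carrier.indicator 1 h := by
      simpa using congrFun (sum_charPairing_smul_irrChars hclass) h
    _ = Nat.card G := by simp [ConjClasses.mem_carrier_mk]

end ColumnOrthogonality

section Twisting

open scoped IsMulCommutative

lemma IsIrrChar.isIrrChar_charMul [Finite G] {ρ : G → ℂ} (hρ : IsIrrChar G ρ) (N : Subgroup G)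
    [N.Normal] (χ : (G ⧸ N) →* ℂˣ) : IsIrrChar G (charMul N χ ρ) := by
  have := Fintype.ofFinite G
  have hχρ : IsChar G (charMul N χ ρ) := by
    obtain ⟨V, -, rfl⟩ := hρ
    let σ : Representation ℂ G V :=
      { toFun := fun g => (χ (g : G ⧸ N) : ℂ) • V.ρ g
        map_one' := by simp
        map_mul' := fun g h => by simp [smul_smul, mul_comm] }
    exact ⟨FDRep.of σ, funext fun g => (map_smul (LinearMap.trace ℂ V) _ (V.ρ g)).symm⟩
  rw [isIrrChar_iff_charPairing_self hχρ, ← (isIrrChar_iff_charPairing_self hρ.isChar).1 hρ]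
  refine Finset.sum_congr rfl fun g _ => ?_
  simp [charMul, mul_mul_mul_comm _ (ρ g)]

lemma IsChar.restrict {ρ : G → ℂ} (hρ : IsChar G ρ) (N : Subgroup G) : IsChar N fun n => ρ n := by
  obtain ⟨V, rfl⟩ := hρ
  exact ⟨FDRep.of (V.ρ.comp N.subtype), rfl⟩

lemma eq_zero_of_charMul_eq_self {N : Subgroup G} [N.Normal] {χ : (G ⧸ N) →* ℂˣ} {ρ : G → ℂ}
    (hχ : charMul N χ ρ = ρ) {g : G} (hg : χ (g : G ⧸ N) ≠ 1) : ρ g = 0 := by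
  by_contra hρ
  exact hg (Units.ext (mul_eq_right₀ hρ |>.1 (congrFun hχ g)))

/-- The stabilizer of `ρ` for the action `charMul` of the characters of `G ⧸ N`. -/
def charStabilizer (N : Subgroup G) [N.Normal] (ρ : G → ℂ) : Subgroup ((G ⧸ N) →* ℂˣ) where
  carrier := {χ | charMul N χ ρ = ρ}
  one_mem' := by ext; simp [charMul]
  mul_mem' {χ ψ} hχ hψ := by
    ext g
    simpa [charMul, mul_assoc] using
      (congrArg (_ * ·) (congrFun hψ g)).trans (congrFun hχ g)
  inv_mem' {χ} hχ := by
    ext g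
    simpa [charMul] using (inv_mul_eq_iff_eq_mul₀ (χ (g : G ⧸ N)).ne_zero).2 (congrFun hχ g).symm

lemma mem_charStabilizer {N : Subgroup G} [N.Normal] {χ : (G ⧸ N) →* ℂˣ} {ρ : G → ℂ} :
    χ ∈ charStabilizer N ρ ↔ charMul N χ ρ = ρ := Iff.rfl

open Classical in
lemma sum_monoidHom_apply {Q : Type*} (R : Type*) [Group Q] [Finite Q] [IsMulCommutative Q]
    [CommRing R] [IsDomain R] [HasEnoughRootsOfUnity R (Monoid.exponent Q)] [Fintype (Q →* Rˣ)]
    (x : Q) : ∑ χ : Q →* Rˣ, (χ x : R) = if x = 1 then (Nat.card Q : R) else 0 := by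
  have htriv : (Units.coeHom R).comp (MonoidHom.eval x) = (1 : (Q →* Rˣ) →* R) ↔ x = 1 := by
    refine ⟨fun h => ?_, fun h => by ext; simp [h]⟩
    by_contra hx
    obtain ⟨χ, hχ⟩ := CommGroup.exists_apply_ne_one_of_hasEnoughRootsOfUnity Q R hx
    exact hχ (Units.ext (DFunLike.congr_fun h χ))
  have hsum := sum_hom_units ((Units.coeHom R).comp (MonoidHom.eval x) : (Q →* Rˣ) →* R)
  simpa [htriv, ← Nat.card_eq_fintype_card,
    CommGroup.card_monoidHom_of_hasEnoughRootsOfUnity Q R] using hsum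

section Fintype

variable [Fintype G] (N : Subgroup G) [N.Normal] {ρ : G → ℂ}

open Classical in
lemma sum_mul_charPairing_charMul [IsMulCommutative (G ⧸ N)] [Fintype ((G ⧸ N) →* ℂˣ)] (a : G)
    (f f' : G → ℂ) :
    ∑ χ : (G ⧸ N) →* ℂˣ, (χ (a : G ⧸ N)⁻¹ : ℂ) * charPairing (charMul N χ f) f' =
      N.index * ∑ g with g ∈ coset N a, f g * f' g⁻¹ := by
  calc
    _ = ∑ g : G, (∑ χ : (G ⧸ N) →* ℂˣ, (χ ((g : G ⧸ N) * (a : G ⧸ N)⁻¹) : ℂ)) *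
        (f g * f' g⁻¹) := by
      simp only [charPairing_apply, Finset.mul_sum, Finset.sum_mul, charMul, map_mul,
        Units.val_mul]
      rw [Finset.sum_comm]
      exact Finset.sum_congr rfl fun g _ => Finset.sum_congr rfl fun χ _ => by ring
    _ = _ := by
      simp only [sum_monoidHom_apply, mul_inv_eq_one, ite_mul, zero_mul, coset,
        Set.mem_ofPred_eq, Subgroup.index, ← Finset.sum_filter, ← Finset.mul_sum]
      congr

open Classical in
lemma IsIrrChar.sum_coset_eq_sum_charStabilizer [IsMulCommutative (G ⧸ N)]
    [Fintype ((G ⧸ N) →* ℂˣ)] (hρ : IsIrrChar G ρ) (a : G) :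
    ∑ g with g ∈ coset N a, ρ g * ρ g⁻¹ =
      Nat.card N * ∑ χ with χ ∈ charStabilizer N ρ, (χ (a : G ⧸ N)⁻¹ : ℂ) := by
  have hindex : (N.index : ℂ) ≠ 0 := Nat.cast_ne_zero.2 N.index_ne_zero_of_finite
  refine mul_left_cancel₀ hindex ?_
  rw [← sum_mul_charPairing_charMul, ← mul_assoc, ← Nat.cast_mul, N.index_mul_card,
    Finset.sum_filter, Finset.mul_sum]
  refine Finset.sum_congr rfl fun χ _ => ?_
  rw [(hρ.isIrrChar_charMul N χ).charPairing_eq_ite hρ, mul_ite, mul_zero, mul_ite, mul_zero,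
    mul_comm]
  exact if_congr mem_charStabilizer.symm rfl rfl

end Fintype

lemma IsIrrChar.isIrrChar_restrict_iff [Finite G] {ρ : G → ℂ} (hρ : IsIrrChar G ρ)
    (N : Subgroup G) [N.Normal] [IsMulCommutative (G ⧸ N)] :
    IsIrrChar N (fun n => ρ n) ↔ charStabilizer N ρ = ⊥ := by
  classical
  have := Fintype.ofFinite G
  have := Fintype.ofFinite ((G ⧸ N) →* ℂˣ)
  have hpairing : charPairing (fun n : N => ρ n) (fun n => ρ n) =
      Nat.card N * Nat.card (charStabilizer N ρ) := by
    calc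
      _ = ∑ g with g ∈ coset N 1, ρ g * ρ g⁻¹ :=
        (Finset.sum_subtype _ (by simp [coset]) fun g => ρ g * ρ g⁻¹).symm
      _ = _ := by
        rw [hρ.sum_coset_eq_sum_charStabilizer N]
        simp [Nat.card_eq_fintype_card, Fintype.card_subtype]
  rw [isIrrChar_iff_charPairing_self (hρ.isChar.restrict N), hpairing,
    mul_eq_left₀ (NeZero.ne (Nat.card N : ℂ)), Nat.cast_eq_one, Subgroup.card_eq_one]

open Classical in
lemma IsIrrChar.sum_coset_eq_ite [Fintype G] {ρ : G → ℂ} (hρ : IsIrrChar G ρ) {N : Subgroup G}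
    [N.Normal] {q : G} (hgen : ∀ x : G ⧸ N, x ∈ Subgroup.zpowers (q : G ⧸ N)) :
    ∑ g with g ∈ coset N q, ρ g * ρ g⁻¹ =
      if IsIrrChar N (fun n => ρ n) then (Nat.card N : ℂ) else 0 := by
  have : IsCyclic (G ⧸ N) := ⟨q, hgen⟩
  have := Fintype.ofFinite ((G ⧸ N) →* ℂˣ)
  simp only [hρ.isIrrChar_restrict_iff N]
  split_ifs with hbot
  · rw [hρ.sum_coset_eq_sum_charStabilizer N, hbot]
    simp [Subgroup.mem_bot, Finset.filter_eq']
  · obtain ⟨χ, hχ, hχ1⟩ := (Subgroup.bot_or_exists_ne_one _).resolve_left hbot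
    refine Finset.sum_eq_zero fun g hg => ?_
    have hgq : (g : G ⧸ N) = q := (Finset.mem_filter.1 hg).2
    have hχq : χ (g : G ⧸ N) ≠ 1 := fun h =>
      hχ1 (MonoidHom.eq_iff_eq_on_generator hgen χ 1 |>.2 (hgq ▸ h))
    rw [eq_zero_of_charMul_eq_self (mem_charStabilizer.1 hχ) hχq, zero_mul]

end Twisting

/-- If `G ⧸ N` is cyclic generated by `qN`, then `(G:N)` times the number
of conjugacy classes of `G` in `qN` equals the number of irreducible characters of `G`
whose restriction to `N` is irreducible. -/
theorem index_mul_conjClasses_coset_card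
    (G : Type) [Group G] [Fintype G] (N : Subgroup G) [N.Normal] (q : G)
    (hgen : ∀ x : G ⧸ N, x ∈ Subgroup.zpowers ((q : G ⧸ N))) :
    N.index * (Cset N q).ncard =
      {ρ : G → ℂ | IsIrrChar G ρ ∧ IsIrrChar ↥N (fun n : ↥N => ρ ↑n)}.ncard := by
  classical
  have : IsCyclic (G ⧸ N) := ⟨q, hgen⟩
  suffices (Nat.card N : ℂ) * (N.index * (Cset N q).ncard : ℕ) = Nat.card N *
      {ρ : G → ℂ | IsIrrChar G ρ ∧ IsIrrChar N (fun n : N => ρ n)}.ncard from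
    Nat.cast_injective (mul_left_cancel₀ (NeZero.ne _) this)
  calc
    (Nat.card N : ℂ) * (N.index * (Cset N q).ncard : ℕ) = Nat.card G * (Cset N q).ncard := by
      rw [← Nat.cast_mul, ← mul_assoc, N.card_mul_index, Nat.cast_mul]
    _ = ∑ g with g ∈ coset N q, ∑ ρ ∈ irrChars G, ρ g * ρ g⁻¹ := by
      simp only [← sum_inv_ncard_carrier ℂ (Cset N q), mk_mem_Cset_iff, sum_irrChars_mul_inv,
        div_eq_mul_inv, Finset.mul_sum]
    _ = ∑ ρ ∈ irrChars G, if IsIrrChar N (fun n => ρ n) then (Nat.card N : ℂ) else 0 := by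
      rw [Finset.sum_comm]
      exact Finset.sum_congr rfl fun ρ hρ =>
        (mem_irrChars.1 hρ).sum_coset_eq_ite hgen
    _ = _ := by
      rw [← Finset.sum_filter, Finset.sum_const, nsmul_eq_mul, mul_comm, ← Set.ncard_coe_finset]
      simp [mem_irrChars]
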